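/- Let g ≠ h be two indices in {0,…,n/s−1}, let π be the permutation of {0,…,ℓ−1} that exchanges the g-th and h-th base-s digits of its argument, and let P be the ℓ × ℓ permutation matrix with P(i,j) = 1 if and only if j = π(i). Then for every b ∈ {0,…,s−1} and every t ≥ 1: (i) the matrix (P ⊗ I_t) · A_{g,b}^(t) · P, viewed as an ℓ × ℓ block matrix whose blocks are column vectors of length t, has (i,j) block equal to L_{gs^2+bs+j_h}^(t) if i = j, equal to −L_{gs^2+bs+j_h}^(t) if i_h = b ≠ j_h and i_u = j_u for all u ≠ h, and zero otherwise — i.e., it is obtained from A_{h,b}^(t) by replacing λ_{hs^2+bs+j} with λ_{gs^2+bs+j} for each j ∈ {0,…,s−1}; and (ii) for every a ∉ {g,h}, (P ⊗ I_t) · A_{a,b}^(t) · P = A_{a,b}^(t). -/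

import Mathlib

open Matrix

/-- The `u`-th digit of `i` in base `s`. -/
def digit (s i u : ℕ) : ℕ := i / s ^ u % s

open scoped Classical in
/-- Generalized block entry: the `z`-th entry of the `(i,j)` block of an `A`-type matrix
whose `λ`-indices start at `base` and whose relevant digit position is `apos`:
it is `λ_{base+bs+j_apos}^z` if `i = j`, `−λ_{base+bs+j_apos}^z` if
`i_apos = b ≠ j_apos` and `i_u = j_u` for all `u ≠ apos`, and `0` otherwise. -/
noncomputable def AentGen {F : Type*} [Field F] (lam : ℕ → F) (s base apos b i j z : ℕ) : F :=
  if i = j then lam (base + b * s + digit s j apos) ^ z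
  else if digit s i apos = b ∧ digit s j apos ≠ b ∧
      (∀ u, u ≠ apos → digit s i u = digit s j u) then
    -(lam (base + b * s + digit s j apos) ^ z)
  else 0

/-- The block entry of `A_{a,b}^{(t)}` of the first construction (`λ`-index base `a·s²`,
digit position `a`). -/
noncomputable def Aent {F : Type*} [Field F] (lam : ℕ → F) (s a b i j z : ℕ) : F :=
  AentGen lam s (a * s * s) a b i j z

/-- `A_{a,b}^{(t)}` as an `ℓt × ℓ` matrix; row `ρ` encodes block row `ρ / t` and
inner row `ρ % t`. -/
noncomputable def Amat {F : Type*} [Field F] (lam : ℕ → F) (s ℓ a b t : ℕ) :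
    Matrix (Fin (ℓ * t)) (Fin ℓ) F :=
  Matrix.of fun ρ j => Aent lam s a b ((ρ : ℕ) / t) (j : ℕ) ((ρ : ℕ) % t)

/-- The permutation `π_{g,h}` of `ℕ` exchanging the `g`-th and `h`-th base-`s` digits. -/
def swapDigits (s g h i : ℕ) : ℕ :=
  i - digit s i g * s ^ g - digit s i h * s ^ h + digit s i h * s ^ g + digit s i g * s ^ h

/-- The `ℓ × ℓ` permutation matrix `P_{g,h}` with `P(i,j) = 1` iff `j = π_{g,h}(i)`. -/
def Pmat (F : Type*) [Field F] (s g h ℓ : ℕ) : Matrix (Fin ℓ) (Fin ℓ) F :=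
  Matrix.of fun i j => if (j : ℕ) = swapDigits s g h (i : ℕ) then 1 else 0

/-- The `ℓt × ℓt` matrix `P_{g,h} ⊗ I_t` (rows/columns `ρ` encode block `ρ / t` and
inner index `ρ % t`). -/
def PkronI (F : Type*) [Field F] (s g h ℓ t : ℕ) :
    Matrix (Fin (ℓ * t)) (Fin (ℓ * t)) F :=
  Matrix.of fun ρ κ =>
    if (κ : ℕ) / t = swapDigits s g h ((ρ : ℕ) / t) ∧ (κ : ℕ) % t = (ρ : ℕ) % t then 1 else 0

theorem digit_add_aux {s g m c : ℕ} (hs : 2 ≤ s) (hm : digit s m g = 0) (hc : c < s) (u : ℕ) :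
    digit s (m + c * s ^ g) u = if u = g then c else digit s m u := by
  have hpos : ∀ v, 0 < s ^ v := fun v => Nat.pow_pos (by omega)
  unfold digit at *
  rcases lt_trichotomy u g with hu | hu | hu
  · rw [if_neg hu.ne]
    obtain ⟨e, rfl⟩ := Nat.exists_eq_add_of_lt hu
    have : m + c * s ^ (u + e + 1) = m + s ^ u * (s * (c * s ^ e)) := by ring
    rw [this, Nat.add_mul_div_left _ _ (hpos u), Nat.add_mul_mod_self_left]
  · subst hu
    rw [if_pos rfl, Nat.add_mul_div_right _ _ (hpos u), Nat.add_mod, hm]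
    simp [Nat.mod_eq_of_lt hc]
  · rw [if_neg hu.ne']
    obtain ⟨e, rfl⟩ := Nat.exists_eq_add_of_lt hu
    have h1 : s ^ (g + e + 1) = s ^ g * (s * s ^ e) := by ring
    have h2 : (m / s ^ g + c) / s = m / s ^ g / s := by
      obtain ⟨k, hk⟩ := Nat.dvd_of_mod_eq_zero hm
      rw [hk, Nat.mul_add_div (by omega), Nat.div_eq_of_lt hc, Nat.mul_div_cancel_left _ (by omega)]
      rfl
    rw [h1, ← Nat.div_div_eq_div_mul, ← Nat.div_div_eq_div_mul, ← Nat.div_div_eq_div_mul,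
      ← Nat.div_div_eq_div_mul, Nat.add_mul_div_right _ _ (hpos g), h2]

theorem digit_lt_aux {s : ℕ} (hs : 2 ≤ s) (i u : ℕ) : digit s i u < s :=
  Nat.mod_lt _ (by omega)

theorem digit_mul_le_aux (s i g : ℕ) : digit s i g * s ^ g ≤ i :=
  (Nat.mul_le_mul_right _ (Nat.mod_le _ _)).trans (Nat.div_mul_le_self _ _)

theorem digit_sub_aux {s : ℕ} (hs : 2 ≤ s) (i g u : ℕ) :
    digit s (i - digit s i g * s ^ g) u = if u = g then 0 else digit s i u := by
  have hle := digit_mul_le_aux s i g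
  have h0 : digit s (i - digit s i g * s ^ g) g = 0 := by
    have : (i - digit s i g * s ^ g) / s ^ g = i / s ^ g - digit s i g := by
      rw [mul_comm, Nat.sub_mul_div]
    rw [digit, this]
    unfold digit
    exact Nat.sub_mod_eq_zero_of_mod_eq (by simp)
  have h1 := digit_add_aux hs h0 (digit_lt_aux hs i g) u
  rw [Nat.sub_add_cancel hle] at h1
  split_ifs with hu
  · rw [hu, h0]
  · rw [if_neg hu] at h1; exact h1.symm

theorem digit_swap_aux {s g h : ℕ} (hs : 2 ≤ s) (hgh : g ≠ h) (i u : ℕ) :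
    digit s (swapDigits s g h i) u = digit s i (Equiv.swap g h u) := by
  unfold swapDigits
  set x := i - digit s i g * s ^ g with hx
  have hxd : ∀ u, digit s x u = if u = g then 0 else digit s i u := digit_sub_aux hs i g
  have hxh : digit s i h = digit s x h := by rw [hxd, if_neg hgh.symm]
  have hyd : ∀ u, digit s (x - digit s i h * s ^ h) u = if u = h then 0 else digit s x u := by
    rw [hxh]; exact digit_sub_aux hs x h
  set y := x - digit s i h * s ^ h
  have hy : digit s y g = 0 := by rw [hyd, if_neg hgh, hxd, if_pos rfl]
  have hzd := digit_add_aux hs hy (digit_lt_aux hs i h)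
  have hz : digit s (y + digit s i h * s ^ g) h = 0 := by
    rw [hzd, if_neg hgh.symm, hyd, if_pos rfl]
  rw [digit_add_aux hs hz (digit_lt_aux hs i g), hzd, hyd, hxd, Equiv.swap_apply_def]
  split_ifs <;> simp_all

theorem digit_ext_aux {s : ℕ} (hs : 2 ≤ s) (i : ℕ) :
    ∀ j, (∀ u, digit s i u = digit s j u) → i = j := by
  induction i using Nat.strong_induction_on with
  | _ i ih =>
    have key : ∀ i j, (∀ u, digit s i u = digit s j u) →
        i % s = j % s ∧ ∀ u, digit s (i / s) u = digit s (j / s) u := by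
      intro i j hij
      refine ⟨by simpa [digit] using hij 0, fun u => ?_⟩
      have := hij (u + 1)
      simp only [digit] at *
      rw [Nat.div_div_eq_div_mul, Nat.div_div_eq_div_mul, ← pow_succ']
      exact this
    intro j hij
    obtain ⟨h1, h2⟩ := key i j hij
    rcases Nat.eq_zero_or_pos i with rfl | hi
    · by_contra hj
      have hj : 0 < j := Nat.pos_of_ne_zero (Ne.symm hj)
      -- some digit of `j` is nonzero
      have : ∀ j, 0 < j → ∃ u, digit s j u ≠ 0 := by
        intro j
        induction j using Nat.strong_induction_on with
        | _ j jh =>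
          intro hj
          by_cases hm : j % s = 0
          · have hd : 0 < j / s := Nat.div_pos (Nat.le_of_dvd hj (Nat.dvd_of_mod_eq_zero hm))
              (by omega)
            obtain ⟨u, hu⟩ := jh _ (Nat.div_lt_self hj (by omega)) hd
            refine ⟨u + 1, ?_⟩
            simp only [digit] at *
            rwa [pow_succ', ← Nat.div_div_eq_div_mul]
          · exact ⟨0, by simpa [digit] using hm⟩
      obtain ⟨u, hu⟩ := this j hj
      exact hu (by rw [← hij u]; simp [digit])
    · have h3 := ih (i / s) (Nat.div_lt_self hi (by omega)) _ h2
      rw [← Nat.div_add_mod i s, ← Nat.div_add_mod j s, h1, h3]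

theorem swap_swap_aux {s g h : ℕ} (hs : 2 ≤ s) (hgh : g ≠ h) (i : ℕ) :
    swapDigits s g h (swapDigits s g h i) = i := by
  apply digit_ext_aux hs
  intro u
  rw [digit_swap_aux hs hgh, digit_swap_aux hs hgh, Equiv.swap_apply_self]

theorem swap_lt_aux {s g h m i : ℕ} (hs : 2 ≤ s) (hgh : g ≠ h) (hg : g < m) (hh : h < m)
    (hi : i < s ^ m) : swapDigits s g h i < s ^ m := by
  have : swapDigits s g h i / s ^ m = 0 := by
    apply digit_ext_aux hs
    intro u
    have h1 : digit s (swapDigits s g h i / s ^ m) u = digit s (swapDigits s g h i) (m + u) := by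
      simp only [digit]
      rw [Nat.div_div_eq_div_mul, ← pow_add]
    rw [h1, digit_swap_aux hs hgh, Equiv.swap_apply_of_ne_of_ne (by omega) (by omega)]
    have : i < s ^ (m + u) := hi.trans_le (Nat.pow_le_pow_right (by omega) (by omega))
    simp [digit, Nat.div_eq_of_lt this]
  exact (Nat.div_eq_zero_iff.mp this).resolve_left (Nat.pow_pos (by omega)).ne'

theorem AentGen_swap_aux {F : Type*} [Field F] (lam : ℕ → F) {s g h : ℕ} (hs : 2 ≤ s)
    (hgh : g ≠ h) (base a b i j z : ℕ) :
    AentGen lam s base a b (swapDigits s g h i) (swapDigits s g h j) z =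
      AentGen lam s base (Equiv.swap g h a) b i j z := by
  have h1 : swapDigits s g h i = swapDigits s g h j ↔ i = j := by
    refine ⟨fun e => ?_, fun e => by rw [e]⟩
    rw [← swap_swap_aux hs hgh i, e, swap_swap_aux hs hgh]
  have h2 : (∀ u, u ≠ a → digit s i (Equiv.swap g h u) = digit s j (Equiv.swap g h u)) ↔
      (∀ u, u ≠ Equiv.swap g h a → digit s i u = digit s j u) := by
    constructor
    · intro H u hu
      have := H (Equiv.swap g h u) (fun e => hu (by rw [← e, Equiv.swap_apply_self]))
      rwa [Equiv.swap_apply_self] at this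
    · intro H u hu
      exact H _ (fun e => hu ((Equiv.swap g h).injective e))
  have h3 : (digit s (swapDigits s g h i) a = b ∧ digit s (swapDigits s g h j) a ≠ b ∧
      ∀ u, u ≠ a → digit s (swapDigits s g h i) u = digit s (swapDigits s g h j) u) ↔
      (digit s i (Equiv.swap g h a) = b ∧ digit s j (Equiv.swap g h a) ≠ b ∧
        ∀ u, u ≠ Equiv.swap g h a → digit s i u = digit s j u) := by
    rw [← h2]
    simp only [digit_swap_aux hs hgh]
  unfold AentGen
  have h4 := digit_swap_aux hs hgh j a
  refine if_congr h1 (by rw [h4]) ?_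
  by_cases hc : (digit s i (Equiv.swap g h a) = b ∧ digit s j (Equiv.swap g h a) ≠ b ∧
        ∀ u, u ≠ Equiv.swap g h a → digit s i u = digit s j u)
  · rw [if_pos hc, if_pos (h3.mpr hc), h4]
  · rw [if_neg hc, if_neg (fun e => hc (h3.mp e))]

theorem prod_entry_aux {F : Type*} [Field F] (lam : ℕ → F) {s g h m t : ℕ} (hs : 2 ≤ s)
    (hgh : g ≠ h) (hg : g < m) (hh : h < m) (ht : 1 ≤ t) (a b : ℕ)
    (ρ : Fin (s ^ m * t)) (j : Fin (s ^ m)) :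
    (PkronI F s g h (s ^ m) t * Amat lam s (s ^ m) a b t * Pmat F s g h (s ^ m)) ρ j =
      AentGen lam s (a * s * s) (Equiv.swap g h a) b ((ρ : ℕ) / t) (j : ℕ) ((ρ : ℕ) % t) := by
  have hρ : (ρ : ℕ) / t < s ^ m := Nat.div_lt_of_lt_mul (ρ.2.trans_eq (mul_comm _ _))
  have hσ := swap_lt_aux hs hgh hg hh hρ
  have hmod : (ρ : ℕ) % t < t := Nat.mod_lt _ ht
  have hκ : swapDigits s g h ((ρ : ℕ) / t) * t + (ρ : ℕ) % t < s ^ m * t := by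
    have := Nat.mul_le_mul_right t hσ
    rw [Nat.succ_mul] at this
    omega
  have hd : (swapDigits s g h ((ρ : ℕ) / t) * t + (ρ : ℕ) % t) / t =
      swapDigits s g h ((ρ : ℕ) / t) := by
    rw [mul_comm, Nat.mul_add_div (by omega), Nat.div_eq_of_lt hmod, Nat.add_zero]
  have hm' : (swapDigits s g h ((ρ : ℕ) / t) * t + (ρ : ℕ) % t) % t = (ρ : ℕ) % t := by
    rw [mul_comm, Nat.mul_add_mod, Nat.mod_mod]
  rw [Matrix.mul_apply, Finset.sum_eq_single
    (⟨swapDigits s g h j, swap_lt_aux hs hgh hg hh j.2⟩ : Fin (s ^ m))]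
  · rw [Matrix.mul_apply, Finset.sum_eq_single (⟨_, hκ⟩ : Fin (s ^ m * t))]
    · simp only [PkronI, Amat, Pmat, Aent, Matrix.of_apply, hd, hm', swap_swap_aux hs hgh]
      simp [AentGen_swap_aux lam hs hgh]
    · intro κ _ hne
      have : ¬ ((κ : ℕ) / t = swapDigits s g h ((ρ : ℕ) / t) ∧ (κ : ℕ) % t = (ρ : ℕ) % t) := by
        rintro ⟨e1, e2⟩
        apply hne
        ext
        change (κ : ℕ) = swapDigits s g h ((ρ : ℕ) / t) * t + (ρ : ℕ) % t
        rw [← e1, ← e2, Nat.div_add_mod']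
      simp only [PkronI, Matrix.of_apply, if_neg this, zero_mul]
    · intro hn; exact absurd (Finset.mem_univ _) hn
  · intro j' _ hne
    have : ¬ ((j : ℕ) = swapDigits s g h j') := by
      intro e
      apply hne
      ext
      change (j' : ℕ) = swapDigits s g h j
      rw [e, swap_swap_aux hs hgh]
    simp only [Pmat, Matrix.of_apply, if_neg this, mul_zero]
  · intro hn; exact absurd (Finset.mem_univ _) hn

/-- Lemma 8 of the paper: for distinct groups `g ≠ h`,
(i) `(P ⊗ I_t) · A_{g,b}^{(t)} · P` is obtained from `A_{h,b}^{(t)}` by replacing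
`λ_{hs²+bs+j}` with `λ_{gs²+bs+j}` (block entry with digit position `h` and `λ`-base `gs²`);
(ii) for `a ∉ {g,h}`, `(P ⊗ I_t) · A_{a,b}^{(t)} · P = A_{a,b}^{(t)}`. -/
theorem statement9 (F : Type*) [Field F] [Fintype F] (n k d s ℓ : ℕ)
    (hk : 1 ≤ k) (hkn : k < n) (hd₁ : k + 1 ≤ d) (hd₂ : d ≤ n - 1)
    (hs : s = d - k + 1) (hdiv : s ∣ n) (hℓ : ℓ = s ^ (n / s))
    (lam : ℕ → F)
    (g h : ℕ) (hg : g < n / s) (hh : h < n / s) (hgh : g ≠ h)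
    (b : ℕ) (hb : b < s) (t : ℕ) (ht : 1 ≤ t) :
    (∀ (ρ : Fin (ℓ * t)) (j : Fin ℓ),
      (PkronI F s g h ℓ t * Amat lam s ℓ g b t * Pmat F s g h ℓ) ρ j =
        AentGen lam s (g * s * s) h b ((ρ : ℕ) / t) (j : ℕ) ((ρ : ℕ) % t)) ∧
    (∀ a, a < n / s → a ≠ g → a ≠ h →
      PkronI F s g h ℓ t * Amat lam s ℓ a b t * Pmat F s g h ℓ = Amat lam s ℓ a b t) := by
  have hs2 : 2 ≤ s := by omega
  subst hℓ
  refine ⟨fun ρ j => ?_, fun a _ hag hah => ?_⟩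
  · rw [prod_entry_aux lam hs2 hgh hg hh ht, Equiv.swap_apply_left]
  · ext ρ j
    rw [prod_entry_aux lam hs2 hgh hg hh ht, Equiv.swap_apply_of_ne_of_ne hag hah]
    rfl
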